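/- Suppose the graph sequence {𝔾(t)} of the column stochastic matrix sequence {W(t)} is uniformly strongly connected. Let y(t+1) = W(t) y(t), y(0) = 𝟙, and S(t)_{ij} = W(t)_{ij} y_j(t) / y_i(t+1). Then there exist constants C > 0 and μ ∈ [0,1) such that for all i, j ∈ {1,…,n} and all t ≥ τ ≥ 0: | [Φ_S(t+1,τ)]_{ij} − y_j(τ)/n | ≤ C μ^{t−τ}, where Φ_S(t,τ) = S(t−1)⋯S(τ); i.e., S(t)⋯S(τ+1)S(τ) converges to (1/n) 𝟙 y(τ)ᵀ exponentially fast as t → ∞. -/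

import Mathlib

open Filter Finset

/-- `matProd M τ k = M (τ+k-1) * ⋯ * M (τ+1) * M τ` (the product of `k` factors),
i.e. the state-transition matrix `Φ_M (τ+k, τ)`. -/
def matProd {n : ℕ} (M : ℕ → Matrix (Fin n) (Fin n) ℝ) (τ : ℕ) : ℕ → Matrix (Fin n) (Fin n) ℝ
  | 0 => 1
  | k + 1 => M (τ + k) * matProd M τ k

theorem aux_add {n : ℕ} (M : ℕ → Matrix (Fin n) (Fin n) ℝ) (τ a b : ℕ) :
    matProd M τ (a + b) = matProd M (τ + a) b * matProd M τ a := by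
  induction b with
  | zero => simp [matProd]
  | succ b ih =>
    rw [← add_assoc, matProd, ih, matProd, Matrix.mul_assoc, add_assoc]

theorem aux_nonneg {n : ℕ} (M : ℕ → Matrix (Fin n) (Fin n) ℝ)
    (h : ∀ t i j, 0 ≤ M t i j) (τ k : ℕ) : ∀ i j, 0 ≤ matProd M τ k i j := by
  induction k with
  | zero =>
    intro i j
    simp only [matProd, Matrix.one_apply]
    split_ifs <;> norm_num
  | succ k ih =>
    intro i j
    rw [matProd, Matrix.mul_apply]
    exact Finset.sum_nonneg fun l _ => mul_nonneg (h _ _ _) (ih _ _)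

theorem aux_row {n : ℕ} (M : ℕ → Matrix (Fin n) (Fin n) ℝ)
    (h : ∀ t i, ∑ j, M t i j = 1) (τ k : ℕ) : ∀ i, ∑ j, matProd M τ k i j = 1 := by
  induction k with
  | zero =>
    intro i
    simp [matProd, Matrix.one_apply]
  | succ k ih =>
    intro i
    simp only [matProd, Matrix.mul_apply]
    rw [Finset.sum_comm]
    simp only [← Finset.mul_sum, ih, mul_one, h]

theorem aux_col {n : ℕ} (M : ℕ → Matrix (Fin n) (Fin n) ℝ)
    (h : ∀ t j, ∑ i, M t i j = 1) (τ k : ℕ) : ∀ j, ∑ i, matProd M τ k i j = 1 := by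
  induction k with
  | zero =>
    intro i
    simp [matProd, Matrix.one_apply]
  | succ k ih =>
    intro i
    simp only [matProd, Matrix.mul_apply]
    rw [Finset.sum_comm]
    simp only [← Finset.sum_mul, ih, one_mul, h]

/-- contraction of the spread -/
theorem aux_contract {n : ℕ} (Q : Matrix (Fin n) (Fin n) ℝ) (η : ℝ) (hη : 0 ≤ η)
    (hQ : ∀ i j, η ≤ Q i j) (hrow : ∀ i, ∑ j, Q i j = 1) (x : Fin n → ℝ) (D : ℝ) (hD : 0 ≤ D)
    (hx : ∀ i i', x i - x i' ≤ D) (i i' : Fin n) :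
    ∑ j, Q i j * x j - ∑ j, Q i' j * x j ≤ (1 - η) * D := by
  have e1 : ∑ j, Q i j * x j = ∑ j, ∑ l, Q i j * Q i' l * x j := by
    refine Finset.sum_congr rfl fun j _ => ?_
    rw [← Finset.sum_mul, ← Finset.mul_sum, hrow, mul_one]
  have e2 : ∑ l, Q i' l * x l = ∑ j, ∑ l, Q i j * Q i' l * x l := by
    rw [Finset.sum_comm]
    refine Finset.sum_congr rfl fun j _ => ?_
    rw [← Finset.sum_mul, ← Finset.sum_mul, hrow, one_mul]
  have e3 : ∑ j, ∑ l, Q i j * Q i' l * D = D := by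
    simp only [← Finset.sum_mul, ← Finset.mul_sum, hrow, mul_one, one_mul]
  have nn : ∀ i j, 0 ≤ Q i j := fun i j => hη.trans (hQ i j)
  have e4 : ∑ j, ∑ l, Q i j * Q i' l * (if j = l then D else 0) = ∑ j, Q i j * Q i' j * D := by
    simp [mul_ite]
  have e5 : η * D ≤ ∑ j, Q i j * Q i' j * D := by
    have : η * D = ∑ j, Q i j * η * D := by
      rw [← Finset.sum_mul, ← Finset.sum_mul, hrow, one_mul]
    rw [this]
    refine Finset.sum_le_sum fun j _ => ?_
    exact mul_le_mul_of_nonneg_right (mul_le_mul_of_nonneg_left (hQ _ _) (nn _ _)) hD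
  have e6 : ∑ j, ∑ l, Q i j * Q i' l * x j - ∑ j, ∑ l, Q i j * Q i' l * x l ≤
      ∑ j, ∑ l, Q i j * Q i' l * D - ∑ j, ∑ l, Q i j * Q i' l * (if j = l then D else 0) := by
    rw [← Finset.sum_sub_distrib, ← Finset.sum_sub_distrib]
    refine Finset.sum_le_sum fun j _ => ?_
    rw [← Finset.sum_sub_distrib, ← Finset.sum_sub_distrib]
    refine Finset.sum_le_sum fun l _ => ?_
    rw [← mul_sub, ← mul_sub]
    refine mul_le_mul_of_nonneg_left ?_ (mul_nonneg (nn _ _) (nn _ _))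
    split_ifs with h
    · subst h; simp
    · simpa using hx j l
  rw [e1, e2]
  rw [e3, e4] at e6
  linarith

theorem aux_lower {n : ℕ} (W : ℕ → Matrix (Fin n) (Fin n) ℝ)
    (hWnonneg : ∀ t i j, 0 ≤ W t i j)
    (β : ℝ) (hβ : 0 < β)
    (hWβ : ∀ t i j, 0 < W t i j → β ≤ W t i j) (τ k : ℕ) :
    ∀ i j, 0 < matProd W τ k i j → β ^ k ≤ matProd W τ k i j := by
  induction k with
  | zero =>
    intro i j
    simp only [matProd, Matrix.one_apply]
    split_ifs <;> norm_num
  | succ k ih =>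
    intro i j h
    have nn := aux_nonneg W hWnonneg τ k
    rw [matProd, Matrix.mul_apply] at h ⊢
    obtain ⟨l, hl, hp⟩ := Finset.exists_lt_of_sum_lt (s := Finset.univ) (f := fun _ : Fin n => (0:ℝ))
      (g := fun l => W (τ + k) i l * matProd W τ k l j) (by simpa using h)
    have h1 : 0 < W (τ + k) i l := by
      rcases (hWnonneg (τ + k) i l).lt_or_eq with h | h
      · exact h
      · simp [← h] at hp
    have h2 : 0 < matProd W τ k l j := by
      rcases (nn l j).lt_or_eq with h | h
      · exact h
      · simp [← h] at hp
    calc β ^ (k + 1) = β * β ^ k := by ring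
      _ ≤ W (τ + k) i l * matProd W τ k l j :=
        mul_le_mul (hWβ _ _ _ h1) (ih _ _ h2) (by positivity) (hWnonneg _ _ _)
      _ ≤ _ := Finset.single_le_sum (f := fun l => W (τ + k) i l * matProd W τ k l j)
        (fun l _ => mul_nonneg (hWnonneg _ _ _) (nn _ _)) hl

theorem aux_step {n : ℕ} (W : ℕ → Matrix (Fin n) (Fin n) ℝ)
    (hWnonneg : ∀ t i j, 0 ≤ W t i j) (τ k : ℕ) (i l j : Fin n)
    (h1 : 0 < W (τ + k) i l) (h2 : 0 < matProd W τ k l j) : 0 < matProd W τ (k + 1) i j := by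
  rw [matProd, Matrix.mul_apply]
  exact (mul_pos h1 h2).trans_le <|
    Finset.single_le_sum (f := fun l => W (τ + k) i l * matProd W τ k l j)
        (fun l _ => mul_nonneg (hWnonneg _ _ _) (aux_nonneg W hWnonneg τ k _ _)) (Finset.mem_univ l)

theorem aux_pos {n : ℕ} (W : ℕ → Matrix (Fin n) (Fin n) ℝ)
    (hWnonneg : ∀ t i j, 0 ≤ W t i j)
    (hWdiag : ∀ t i, 0 < W t i i) (L : ℕ)
    (hUSC : ∀ t : ℕ, ∀ i j : Fin n,
      Relation.TransGen (fun u v : Fin n => ∃ k ∈ Finset.Ico t (t + L), 0 < W k v u) i j)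
    (τ : ℕ) (i j : Fin n) : 0 < matProd W τ (n * L) i j := by
  classical
  let A : ℕ → Finset (Fin n) := fun k => Finset.univ.filter fun i => 0 < matProd W τ k i j
  have hA : ∀ k i, i ∈ A k ↔ 0 < matProd W τ k i j := fun k i => by simp [A]
  have mono : Monotone A := monotone_nat_of_le_succ fun k i hi => by
    rw [hA] at hi ⊢
    exact aux_step W hWnonneg τ k i i j (hWdiag _ _) hi
  have hj : ∀ k, j ∈ A k := fun k => mono (Nat.zero_le k) (by rw [hA]; simp [matProd])
  have key : ∀ q, A (q * L) = A ((q + 1) * L) → A (q * L) = Finset.univ := by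
    intro q hq
    rw [Finset.eq_univ_iff_forall]
    intro v
    have := hUSC (τ + q * L) j v
    induction this with
    | single h =>
      obtain ⟨k, hk, hw⟩ := h
      rw [Finset.mem_Ico] at hk
      obtain ⟨d, rfl⟩ := Nat.exists_eq_add_of_le hk.1
      rw [hq]
      have hle : q * L + d + 1 ≤ (q + 1) * L := by rw [add_mul]; omega
      apply mono hle
      rw [hA]
      exact aux_step W hWnonneg τ _ _ _ j (by rwa [← add_assoc]) ((hA _ _).1 (hj _))
    | tail _ h ih =>
      obtain ⟨k, hk, hw⟩ := h
      rw [Finset.mem_Ico] at hk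
      obtain ⟨d, rfl⟩ := Nat.exists_eq_add_of_le hk.1
      rw [hq]
      have hle : q * L + d + 1 ≤ (q + 1) * L := by rw [add_mul]; omega
      apply mono hle
      rw [hA]
      exact aux_step W hWnonneg τ _ _ _ j (by rwa [← add_assoc])
        ((hA _ _).1 (mono (Nat.le_add_right _ _) ih))
  have card : ∀ q, min q n ≤ (A (q * L)).card := by
    intro q
    induction q with
    | zero => simp
    | succ q ih =>
      have hsub : A (q * L) ⊆ A ((q + 1) * L) := mono (Nat.mul_le_mul_right _ (Nat.le_succ q))
      by_cases h : A (q * L) = A ((q + 1) * L)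
      · rw [← h, key q h]; simp
      · have := Finset.card_lt_card (hsub.ssubset_of_ne h)
        omega
  have hc := card n
  rw [min_self] at hc
  have hu : A (n * L) = Finset.univ := by
    rw [← Finset.card_eq_iff_eq_univ, Fintype.card_fin]
    exact le_antisymm (by simpa using Finset.card_le_univ (A (n * L))) hc
  rw [← hA, hu]; simp

theorem stmt_12
    (n : ℕ) (hn : 0 < n)
    (W : ℕ → Matrix (Fin n) (Fin n) ℝ)
    (hWnonneg : ∀ t i j, 0 ≤ W t i j)
    (hWcol : ∀ t j, ∑ i, W t i j = 1)
    (hWdiag : ∀ t i, 0 < W t i i)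
    (β : ℝ) (hβ : 0 < β)
    (hWβ : ∀ t i j, 0 < W t i j → β ≤ W t i j)
    (L : ℕ) (hL : 0 < L)
    (hUSC : ∀ t : ℕ, ∀ i j : Fin n,
      Relation.TransGen (fun u v : Fin n => ∃ k ∈ Finset.Ico t (t + L), 0 < W k v u) i j)
    (y : ℕ → Fin n → ℝ)
    (hy0 : ∀ i, y 0 i = 1)
    (hyrec : ∀ t i, y (t + 1) i = ∑ j, W t i j * y t j)
    (S : ℕ → Matrix (Fin n) (Fin n) ℝ)
    (hS : ∀ t i j, S t i j = W t i j * y t j / y (t + 1) i)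
    :
    ∃ C : ℝ, 0 < C ∧ ∃ μ : ℝ, 0 ≤ μ ∧ μ < 1 ∧
      ∀ τ k : ℕ, ∀ i j : Fin n,
        |matProd S τ (k + 1) i j - y τ j / n| ≤ C * μ ^ k := by
  have hβ1 : β ≤ 1 := by
    let i0 : Fin n := ⟨0, hn⟩
    refine (hWβ 0 i0 i0 (hWdiag 0 i0)).trans ?_
    rw [← hWcol 0 i0]
    exact Finset.single_le_sum (f := fun i => W 0 i i0) (fun i _ => hWnonneg _ _ _)
      (Finset.mem_univ i0)
  have hnR : (0:ℝ) < n := by exact_mod_cast hn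
  set B := n * L with hB
  have hBpos : 0 < B := Nat.mul_pos hn hL
  have hypos : ∀ t i, 0 < y t i := by
    intro t
    induction t with
    | zero => intro i; rw [hy0]; norm_num
    | succ t ih =>
      intro i
      rw [hyrec]
      exact (mul_pos (hWdiag t i) (ih i)).trans_le <|
        Finset.single_le_sum (f := fun j => W t i j * y t j)
          (fun l _ => mul_nonneg (hWnonneg _ _ _) (ih l).le) (Finset.mem_univ i)
  have hysum : ∀ t, ∑ i, y t i = n := by
    intro t
    induction t with
    | zero => simp [hy0]
    | succ t ih =>
      simp only [hyrec]
      rw [Finset.sum_comm]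
      simp only [← Finset.sum_mul, hWcol, one_mul, ih]
  have hyle : ∀ t i, y t i ≤ n := fun t i => by
    rw [← hysum t]
    exact Finset.single_le_sum (fun i _ => (hypos t i).le) (Finset.mem_univ i)
  have hWP : ∀ τ k i, y (τ + k) i = ∑ j, matProd W τ k i j * y τ j := by
    intro τ k
    induction k with
    | zero => intro i; simp [matProd, Matrix.one_apply]
    | succ k ih =>
      intro i
      rw [← add_assoc, hyrec]
      simp only [ih, matProd, Matrix.mul_apply, Finset.mul_sum, Finset.sum_mul]
      rw [Finset.sum_comm]
      simp only [mul_assoc]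
  have hWB : ∀ τ i j, β ^ B ≤ matProd W τ B i j := fun τ i j =>
    aux_lower W hWnonneg β hβ hWβ τ B i j (aux_pos W hWnonneg hWdiag L hUSC τ i j)
  have hylow : ∀ t i, β ^ B ≤ y t i := by
    intro t i
    rcases le_total B t with h | h
    · obtain ⟨d, rfl⟩ := Nat.exists_eq_add_of_le h
      rw [add_comm B d, hWP]
      calc β ^ B ≤ β ^ B * n := by
            have : (1:ℝ) ≤ n := by exact_mod_cast hn
            have := pow_pos hβ B
            nlinarith
        _ = ∑ j, β ^ B * y d j := by rw [← Finset.mul_sum, hysum]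
        _ ≤ _ := Finset.sum_le_sum fun j _ =>
          mul_le_mul_of_nonneg_right (hWB _ _ _) (hypos _ _).le
    · have h2 : ∀ t i, β ^ t ≤ y t i := by
        intro t
        induction t with
        | zero => intro i; simp [hy0]
        | succ t ih =>
          intro i
          rw [hyrec, pow_succ']
          exact (mul_le_mul (hWβ _ _ _ (hWdiag t i)) (ih i) (by positivity)
            (hWnonneg _ _ _)).trans <|
            Finset.single_le_sum (f := fun j => W t i j * y t j)
              (fun l _ => mul_nonneg (hWnonneg _ _ _) (hypos _ _).le) (Finset.mem_univ i)
      exact (pow_le_pow_of_le_one hβ.le hβ1 h).trans (h2 t i)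
  have hSP : ∀ τ k i j, matProd S τ k i j = matProd W τ k i j * y τ j / y (τ + k) i := by
    intro τ k
    induction k with
    | zero =>
      intro i j
      simp only [matProd, Matrix.one_apply, add_zero]
      split_ifs with h
      · subst h; rw [one_mul, div_self (hypos _ _).ne']
      · simp
    | succ k ih =>
      intro i j
      simp only [matProd, Matrix.mul_apply, Finset.sum_mul, Finset.sum_div, ih, hS]
      refine Finset.sum_congr rfl fun l _ => ?_
      have := (hypos (τ + k) l).ne'
      rw [← add_assoc]
      field_simp
  have hSnn : ∀ t i j, 0 ≤ S t i j := fun t i j => by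
    rw [hS]
    exact div_nonneg (mul_nonneg (hWnonneg _ _ _) (hypos _ _).le) (hypos _ _).le
  have hSrow : ∀ t i, ∑ j, S t i j = 1 := fun t i => by
    simp only [hS]
    rw [← Finset.sum_div, ← hyrec, div_self (hypos _ _).ne']
  obtain ⟨η, hη0, hη1, hSB⟩ : ∃ η : ℝ, 0 < η ∧ η < 1 ∧ ∀ τ i j, η ≤ matProd S τ B i j := by
    have hb := pow_pos hβ B
    refine ⟨min (1/2) (β ^ B * β ^ B / n), lt_min (by norm_num) (by positivity),
      (min_le_left _ _).trans_lt (by norm_num), fun τ i j => (min_le_right _ _).trans ?_⟩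
    rw [hSP]
    exact div_le_div₀ (mul_nonneg (hb.le.trans (hWB _ _ _)) (hypos _ _).le)
      (mul_le_mul (hWB _ _ _) (hylow _ _) hb.le (hb.le.trans (hWB _ _ _))) (hypos _ _) (hyle _ _)
  have hρ : 0 < 1 - η := by linarith
  have spread : ∀ τ q j i i', matProd S τ (q * B) i j - matProd S τ (q * B) i' j ≤ (1 - η) ^ q := by
    intro τ q j
    induction q with
    | zero =>
      intro i i'
      simp only [zero_mul, matProd, Matrix.one_apply, pow_zero]
      split_ifs <;> norm_num
    | succ q ih =>
      intro i i'
      rw [add_mul, one_mul, aux_add, Matrix.mul_apply, Matrix.mul_apply, pow_succ']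
      exact aux_contract (matProd S (τ + q * B) B) η hη0.le (hSB _) (aux_row S hSrow _ _)
        (fun l => matProd S τ (q * B) l j) _ (by positivity) ih i i'
  have spread2 : ∀ τ q r j i i',
      matProd S τ (q * B + r) i j - matProd S τ (q * B + r) i' j ≤ (1 - η) ^ q := by
    intro τ q r j i i'
    rw [aux_add, Matrix.mul_apply, Matrix.mul_apply]
    have := aux_contract (matProd S (τ + q * B) r) 0 le_rfl (aux_nonneg S hSnn _ _)
      (aux_row S hSrow _ _)
      (fun l => matProd S τ (q * B) l j) _ (by positivity) (spread τ q j) i i'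
    simpa using this
  have avg : ∀ τ k j, ∑ i, y (τ + k) i * matProd S τ k i j = y τ j := by
    intro τ k j
    have : ∀ i, y (τ + k) i * matProd S τ k i j = matProd W τ k i j * y τ j := fun i => by
      rw [hSP, mul_div_cancel₀ _ (hypos _ _).ne']
    simp only [this]
    rw [← Finset.sum_mul, aux_col W hWcol, one_mul]
  have dev : ∀ τ k j D, (∀ i i', matProd S τ k i j - matProd S τ k i' j ≤ D) →
      ∀ i, |matProd S τ k i j - y τ j / n| ≤ D := by
    intro τ k j D h i
    have e : (matProd S τ k i j - y τ j / n) * n =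
        ∑ l, y (τ + k) l * (matProd S τ k i j - matProd S τ k l j) := by
      simp only [mul_sub, Finset.sum_sub_distrib, avg, ← Finset.sum_mul, hysum]
      field_simp
    have eD : D * n = ∑ l, y (τ + k) l * D := by rw [← Finset.sum_mul, hysum, mul_comm]
    rw [abs_le]
    constructor
    · refine le_of_mul_le_mul_right ?_ hnR
      rw [e, neg_mul, eD, ← Finset.sum_neg_distrib]
      refine Finset.sum_le_sum fun l _ => ?_
      rw [← mul_neg]
      exact mul_le_mul_of_nonneg_left (by linarith [h l i]) (hypos _ _).le
    · refine le_of_mul_le_mul_right ?_ hnR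
      rw [e, eD]
      exact Finset.sum_le_sum fun l _ => mul_le_mul_of_nonneg_left (h i l) (hypos _ _).le
  have hBR : (B:ℝ) ≠ 0 := by exact_mod_cast hBpos.ne'
  obtain ⟨μ, hμ0, hμ1, hμB⟩ : ∃ μ : ℝ, 0 ≤ μ ∧ μ < 1 ∧ μ ^ B = 1 - η :=
    ⟨(1 - η) ^ ((B:ℝ)⁻¹), Real.rpow_nonneg hρ.le _,
      Real.rpow_lt_one hρ.le (by linarith) (by positivity), Real.rpow_inv_natCast_pow hρ.le hBpos.ne'⟩
  refine ⟨(1 - η)⁻¹, inv_pos.2 hρ, μ, hμ0, hμ1, fun τ k i j => ?_⟩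
  have hk : (k + 1) / B * B + (k + 1) % B = k + 1 := Nat.div_add_mod' _ _
  have h1 := dev τ (k + 1) j ((1 - η) ^ ((k + 1) / B)) (by
    have := spread2 τ ((k + 1) / B) ((k + 1) % B) j
    rwa [hk] at this) i
  refine h1.trans ?_
  rw [le_inv_mul_iff₀ hρ, ← pow_succ', ← hμB, ← pow_mul]
  refine pow_le_pow_of_le_one hμ0 hμ1.le ?_
  have := Nat.mod_lt (k + 1) hBpos
  have h3 : B * ((k + 1) / B + 1) = (k + 1) / B * B + B := by ring
  omega
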